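/- If each gradient ∇f_ℓ is Lipschitz continuous on X, then the criticality measure ω is Lipschitz continuous (and hence uniformly continuous) on X. Quantitatively, if L is a Lipschitz constant of the Jacobian map x ↦ Df(x) on X (in the operator norm induced by the Euclidean norm) and D := max_{x∈X} ‖Df(x)‖ (same operator norm), then |ω(x) − ω(y)| ≤ √n·(L + 2D)·‖x − y‖₂ for all x, y ∈ X. (Theorem 2.3, proved in Appendix A.1.) -/

import Mathlib

noncomputable section

/-- The ℓ^∞ (maximum) norm on Euclidean space. -/
def supNorm {n : ℕ} (v : EuclideanSpace ℝ (Fin n)) : ℝ :=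
  ‖(WithLp.equiv 2 (Fin n → ℝ)) v‖

/-- The multiobjective criticality measure
`ω(x) = − inf { max_ℓ ⟨∇f_ℓ(x), d⟩ : x + d ∈ X, ‖d‖_∞ ≤ 1 }`. -/
def omega {n k : ℕ} (X : Set (EuclideanSpace ℝ (Fin n)))
    (f : Fin k → EuclideanSpace ℝ (Fin n) → ℝ) (x : EuclideanSpace ℝ (Fin n)) : ℝ :=
  - sInf ((fun d => ⨆ ℓ, fderiv ℝ (f ℓ) x d) ''
      {d : EuclideanSpace ℝ (Fin n) | x + d ∈ X ∧ supNorm d ≤ 1})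

theorem supNorm_le_norm {n : ℕ} (v : EuclideanSpace ℝ (Fin n)) : supNorm v ≤ ‖v‖ :=
  (pi_norm_le_iff_of_nonneg (norm_nonneg v)).2 fun i => PiLp.norm_apply_le v i

theorem supNorm_nonneg {n : ℕ} (v : EuclideanSpace ℝ (Fin n)) : 0 ≤ supNorm v :=
  norm_nonneg _

theorem supNorm_add_le {n : ℕ} (v w : EuclideanSpace ℝ (Fin n)) :
    supNorm (v + w) ≤ supNorm v + supNorm w :=
  norm_add_le (WithLp.equiv 2 (Fin n → ℝ) v) (WithLp.equiv 2 (Fin n → ℝ) w)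

theorem supNorm_smul {n : ℕ} (t : ℝ) (v : EuclideanSpace ℝ (Fin n)) :
    supNorm (t • v) = |t| * supNorm v :=
  norm_smul t (WithLp.equiv 2 (Fin n → ℝ) v)

theorem norm_le_sqrt_mul_supNorm {n : ℕ} (v : EuclideanSpace ℝ (Fin n)) :
    ‖v‖ ≤ Real.sqrt n * supNorm v := by
  rw [EuclideanSpace.norm_eq, ← Real.sqrt_sq (supNorm_nonneg v),
    ← Real.sqrt_mul (Nat.cast_nonneg n)]
  apply Real.sqrt_le_sqrt
  calc ∑ i, ‖v i‖ ^ 2 ≤ ∑ _i : Fin n, supNorm v ^ 2 := by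
        gcongr with i
        exact norm_le_pi_norm (WithLp.equiv 2 (Fin n → ℝ) v) i
    _ = n * supNorm v ^ 2 := by simp

theorem norm_le_sqrt_of_supNorm_le_one {n : ℕ} {v : EuclideanSpace ℝ (Fin n)}
    (hv : supNorm v ≤ 1) : ‖v‖ ≤ Real.sqrt n :=
  (norm_le_sqrt_mul_supNorm v).trans (mul_le_of_le_one_right (Real.sqrt_nonneg _) hv)

/-- A feasible direction at `x` is close to a feasible direction at `y`: shrink `x + d - y` by
the factor `(1 + ‖x - y‖_∞)⁻¹`. -/
theorem exists_feasible_direction_near {n : ℕ} {X : Set (EuclideanSpace ℝ (Fin n))}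
    (hX : Convex ℝ X) {x y d : EuclideanSpace ℝ (Fin n)} (hy : y ∈ X)
    (hd : x + d ∈ X) (hd1 : supNorm d ≤ 1) :
    ∃ e, y + e ∈ X ∧ supNorm e ≤ 1 ∧ ‖e - d‖ ≤ (1 + Real.sqrt n) * ‖x - y‖ := by
  set δ := supNorm (x - y) with hδ
  have hδ0 : 0 ≤ δ := supNorm_nonneg _
  set t : ℝ := (1 + δ)⁻¹ with ht
  have ht0 : 0 ≤ t := by positivity
  have htδ : t * (1 + δ) = 1 := inv_mul_cancel₀ (by positivity)
  have ht1 : t ≤ 1 := by nlinarith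
  refine ⟨t • (x + d - y), hX.add_smul_sub_mem hy hd ⟨ht0, ht1⟩, ?_, ?_⟩
  · rw [supNorm_smul, abs_of_nonneg ht0, ← htδ]
    gcongr
    calc supNorm (x + d - y) = supNorm (d + (x - y)) := by congr 1; abel
      _ ≤ 1 + δ := (supNorm_add_le _ _).trans (by gcongr)
  · have hdn := norm_le_sqrt_of_supNorm_le_one hd1
    have hδn : δ ≤ ‖x - y‖ := supNorm_le_norm _
    calc ‖t • (x + d - y) - d‖ = ‖t • (x - y) - (1 - t) • d‖ := by congr 1; module
      _ ≤ ‖t • (x - y)‖ + ‖(1 - t) • d‖ := norm_sub_le _ _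
      _ = t * ‖x - y‖ + (1 - t) * ‖d‖ := by
        rw [norm_smul_of_nonneg ht0, norm_smul_of_nonneg (sub_nonneg.2 ht1)]
      _ ≤ 1 * ‖x - y‖ + ‖x - y‖ * Real.sqrt n := by
        gcongr
        nlinarith
      _ = (1 + Real.sqrt n) * ‖x - y‖ := by ring

theorem bddBelow_image_iSup_fderiv {n k : ℕ} (hk : 1 ≤ k)
    (X : Set (EuclideanSpace ℝ (Fin n))) (f : Fin k → EuclideanSpace ℝ (Fin n) → ℝ)
    (x : EuclideanSpace ℝ (Fin n)) :
    BddBelow ((fun d => ⨆ ℓ, fderiv ℝ (f ℓ) x d) ''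
      {d : EuclideanSpace ℝ (Fin n) | x + d ∈ X ∧ supNorm d ≤ 1}) := by
  let ℓ₀ : Fin k := ⟨0, hk⟩
  refine ⟨-(‖fderiv ℝ (f ℓ₀) x‖ * Real.sqrt n), ?_⟩
  rintro _ ⟨d, ⟨-, hd⟩, rfl⟩
  refine le_trans ?_ (le_ciSup (Set.finite_range fun ℓ => fderiv ℝ (f ℓ) x d).bddAbove ℓ₀)
  refine (abs_le.1 (((fderiv ℝ (f ℓ₀) x).le_opNorm d).trans ?_)).1
  gcongr
  exact norm_le_sqrt_of_supNorm_le_one hd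

/-- If every feasible direction at `x` can be matched by one at `y` up to an error `C` in each
directional derivative, then `ω(x) - ω(y) ≤ C`. -/
theorem omega_sub_omega_le {n k : ℕ} (hk : 1 ≤ k) {X : Set (EuclideanSpace ℝ (Fin n))}
    {f : Fin k → EuclideanSpace ℝ (Fin n) → ℝ} {x y : EuclideanSpace ℝ (Fin n)} (hx : x ∈ X)
    {C : ℝ} (h : ∀ d, x + d ∈ X → supNorm d ≤ 1 → ∃ e, y + e ∈ X ∧ supNorm e ≤ 1 ∧
      ∀ ℓ, fderiv ℝ (f ℓ) y e ≤ fderiv ℝ (f ℓ) x d + C) :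
    omega X f x - omega X f y ≤ C := by
  have : Nonempty (Fin k) := ⟨⟨0, hk⟩⟩
  suffices sInf ((fun d => ⨆ ℓ, fderiv ℝ (f ℓ) y d) '' {d | y + d ∈ X ∧ supNorm d ≤ 1}) - C ≤
      sInf ((fun d => ⨆ ℓ, fderiv ℝ (f ℓ) x d) '' {d | x + d ∈ X ∧ supNorm d ≤ 1}) by
    unfold omega
    linarith
  refine le_csInf (Set.Nonempty.image _ ⟨0, by simpa using hx, by simp [supNorm]⟩) ?_
  rintro _ ⟨d, ⟨hdX, hd⟩, rfl⟩
  obtain ⟨e, heX, he, hle⟩ := h d hdX hd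
  rw [sub_le_iff_le_add]
  refine (csInf_le (bddBelow_image_iSup_fderiv hk X f y) ⟨e, ⟨heX, he⟩, rfl⟩).trans ?_
  refine ciSup_le fun ℓ => (hle ℓ).trans ?_
  gcongr
  exact le_ciSup (Set.finite_range fun ℓ => fderiv ℝ (f ℓ) x d).bddAbove ℓ

theorem fderiv_euclidean_apply {n k : ℕ}
    {F : EuclideanSpace ℝ (Fin n) → EuclideanSpace ℝ (Fin k)} {x : EuclideanSpace ℝ (Fin n)}
    (hF : DifferentiableAt ℝ F x) (ℓ : Fin k) (d : EuclideanSpace ℝ (Fin n)) :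
    fderiv ℝ (fun z => F z ℓ) x d = fderiv ℝ F x d ℓ := by
  have h := ((EuclideanSpace.proj (𝕜 := ℝ) ℓ).hasFDerivAt.comp x hF.hasFDerivAt).fderiv
  exact congrArg (fun A => A d) h

/-- Theorem 2.3: if the Jacobian `Df` is Lipschitz on `X` (operator norm induced
by the Euclidean norm) with constant `L`, and `D = max_{x∈X} ‖Df(x)‖`, then the
criticality measure `ω` is Lipschitz on `X` with constant `√n·(L + 2D)`
(w.r.t. the Euclidean norm), hence uniformly continuous. -/
theorem omega_lipschitz
    (n k : ℕ) (hk : 1 ≤ k)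
    (X : Set (EuclideanSpace ℝ (Fin n)))
    (hXne : X.Nonempty) (hXconv : Convex ℝ X) (hXcomp : IsCompact X)
    (f : Fin k → EuclideanSpace ℝ (Fin n) → ℝ)
    (U : Set (EuclideanSpace ℝ (Fin n))) (hUopen : IsOpen U) (hXU : X ⊆ U)
    (hf : ∀ ℓ, ContDiffOn ℝ 1 (f ℓ) U)
    -- the objective map `F = (f_1, …, f_k)` into Euclidean `ℝᵏ`
    (F : EuclideanSpace ℝ (Fin n) → EuclideanSpace ℝ (Fin k))
    (hF : ∀ x ℓ, F x ℓ = f ℓ x)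
    -- `L` is a Lipschitz constant of the Jacobian map `x ↦ Df(x)` on `X`
    (L : ℝ) (hL : ∀ x ∈ X, ∀ y ∈ X, ‖fderiv ℝ F x - fderiv ℝ F y‖ ≤ L * ‖x - y‖)
    -- `D = max_{x∈X} ‖Df(x)‖`
    (D : ℝ) (hD : D = ⨆ x : X, ‖fderiv ℝ F (x : EuclideanSpace ℝ (Fin n))‖)
    (x y : EuclideanSpace ℝ (Fin n)) (hx : x ∈ X) (hy : y ∈ X) :
    |omega X f x - omega X f y| ≤ Real.sqrt n * (L + 2 * D) * ‖x - y‖ := by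
  obtain rfl : f = fun ℓ z => F z ℓ := by
    funext ℓ z
    exact (hF z ℓ).symm
  have hFU : ContDiffOn ℝ 1 F U := contDiffOn_euclidean.2 hf
  have hdiff : ∀ z ∈ X, DifferentiableAt ℝ F z := fun z hz =>
    (hFU.differentiableOn one_ne_zero).differentiableAt (hUopen.mem_nhds (hXU hz))
  have hbdd : BddAbove (Set.range fun z : X => ‖fderiv ℝ F (z : EuclideanSpace ℝ (Fin n))‖) := by
    have hcont : ContinuousOn (fun z => ‖fderiv ℝ F z‖) X :=
      ((hFU.continuousOn_fderiv_of_isOpen hUopen le_rfl).mono hXU).norm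
    simpa [Set.image_eq_range] using hXcomp.bddAbove_image hcont
  have hDle : ∀ z ∈ X, ‖fderiv ℝ F z‖ ≤ D := fun z hz => hD ▸ le_ciSup hbdd ⟨z, hz⟩
  rcases Nat.eq_zero_or_pos n with rfl | hn
  · simp [Subsingleton.elim x y]
  have hsqrt : 1 ≤ Real.sqrt n := Real.one_le_sqrt.2 (by exact_mod_cast hn)
  have key : ∀ x ∈ X, ∀ y ∈ X, omega X (fun ℓ z => F z ℓ) x - omega X (fun ℓ z => F z ℓ) y ≤
      Real.sqrt n * (L + 2 * D) * ‖x - y‖ := by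
    intro x hx y hy
    refine omega_sub_omega_le hk hx fun d hdX hd => ?_
    obtain ⟨e, heX, he, hed⟩ := exists_feasible_direction_near hXconv hy hdX hd
    refine ⟨e, heX, he, fun ℓ => ?_⟩
    rw [fderiv_euclidean_apply (hdiff y hy), fderiv_euclidean_apply (hdiff x hx),
      ← sub_le_iff_le_add', ← PiLp.sub_apply]
    have hD0 : 0 ≤ D := (norm_nonneg _).trans (hDle y hy)
    have hL0 : 0 ≤ L * ‖x - y‖ := (norm_nonneg _).trans (hL x hx y hy)
    calc (fderiv ℝ F y e - fderiv ℝ F x d) ℓ ≤ ‖fderiv ℝ F y e - fderiv ℝ F x d‖ :=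
          (Real.le_norm_self _).trans (PiLp.norm_apply_le _ ℓ)
      _ = ‖fderiv ℝ F y (e - d) - (fderiv ℝ F x - fderiv ℝ F y) d‖ := by
          congr 1
          simp
      _ ≤ ‖fderiv ℝ F y (e - d)‖ + ‖(fderiv ℝ F x - fderiv ℝ F y) d‖ := norm_sub_le _ _
      _ ≤ D * ((1 + Real.sqrt n) * ‖x - y‖) + L * ‖x - y‖ * Real.sqrt n := by
          gcongr
          · exact (fderiv ℝ F y).le_of_opNorm_le_of_le (hDle y hy) hed
          · exact (fderiv ℝ F x - fderiv ℝ F y).le_of_opNorm_le_of_le (hL x hx y hy)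
              (norm_le_sqrt_of_supNorm_le_one hd)
      _ ≤ D * ((Real.sqrt n + Real.sqrt n) * ‖x - y‖) + L * ‖x - y‖ * Real.sqrt n := by
          gcongr
      _ = Real.sqrt n * (L + 2 * D) * ‖x - y‖ := by ring
  refine abs_sub_le_iff.2 ⟨key x hx y hy, ?_⟩
  rw [norm_sub_rev]
  exact key y hy x hx
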